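/- arXiv:2401.09357 — 2 statements merged into one kernel-verified Lean document; each statement's English description precedes it below -/
import Mathlib

section
/- There exists a constant c > 0 such that for every t > 0 and every p ∈ ℝ, the function q ↦ |φ_t(p,q)| is integrable on ℝ and ∫_ℝ |φ_t(p,q)| dq ≤ c·√t. -/
open MeasureTheory Filter Topology

/-- The first-order Dyson kernel factor:
`φ_t(p,q) = (e^{it(p²−q²)} − 1)/(i(p²−q²))` if `p² ≠ q²`, and `t` otherwise. -/
noncomputable def phiK (t p q : ℝ) : ℂ :=
  if p ^ 2 = q ^ 2 then (t : ℂ)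
  else (Complex.exp (Complex.I * t * ((p : ℂ) ^ 2 - (q : ℂ) ^ 2)) - 1) /
    (Complex.I * ((p : ℂ) ^ 2 - (q : ℂ) ^ 2))

lemma phiK_bounds (t p q : ℝ) (ht : 0 < t) :
    ‖phiK t p q‖ ≤ t ∧ ‖phiK t p q‖ * |p ^ 2 - q ^ 2| ≤ 2 := by
  unfold phiK
  split_ifs with h
  · simp [h, abs_of_pos ht]
  · have hd : 0 < |p ^ 2 - q ^ 2| := abs_pos.mpr (sub_ne_zero.mpr h)
    have e1 : Complex.I * t * ((p : ℂ) ^ 2 - (q : ℂ) ^ 2)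
        = Complex.I * ((t * (p ^ 2 - q ^ 2) : ℝ) : ℂ) := by push_cast; ring
    have e2 : ‖Complex.I * ((p : ℂ) ^ 2 - (q : ℂ) ^ 2)‖ = |p ^ 2 - q ^ 2| := by
      rw [norm_mul, Complex.norm_I, one_mul, ← Real.norm_eq_abs, ← Complex.norm_real]
      push_cast; rfl
    rw [norm_div, e2, e1]
    constructor
    · rw [div_le_iff₀ hd]
      refine (Real.norm_exp_I_mul_ofReal_sub_one_le).trans ?_
      rw [norm_mul, Real.norm_eq_abs, abs_of_pos ht, Real.norm_eq_abs]
    · rw [div_mul_cancel₀ _ hd.ne']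
      refine (norm_sub_le _ _).trans ?_
      rw [Complex.norm_exp_I_mul_ofReal]
      norm_num

lemma phiK_le (t p q : ℝ) (ht : 0 < t) :
    ‖phiK t p q‖ ≤ 3 * t * (1 + (√t * (q - p)) ^ 2)⁻¹ + 3 * t * (1 + (√t * (q + p)) ^ 2)⁻¹ := by
  obtain ⟨h1, h2⟩ := phiK_bounds t p q ht
  set N := ‖phiK t p q‖ with hN
  have hN0 : 0 ≤ N := norm_nonneg _
  have key : ∀ x : ℝ, x ^ 2 ≤ |p ^ 2 - q ^ 2| → N ≤ 3 * t * (1 + (√t * x) ^ 2)⁻¹ := by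
    intro x hx
    rw [mul_pow, Real.sq_sqrt ht.le, ← div_eq_mul_inv, le_div_iff₀ (by positivity)]
    have : N * x ^ 2 ≤ 2 := (mul_le_mul_of_nonneg_left hx hN0).trans h2
    nlinarith
  have pos : ∀ x : ℝ, 0 ≤ 3 * t * (1 + (√t * x) ^ 2)⁻¹ := fun x => by positivity
  have hf : |p ^ 2 - q ^ 2| = |q - p| * |q + p| := by
    rw [← abs_mul, abs_sub_comm]; congr 1; ring
  rcases le_total |q - p| |q + p| with h | h
  · have := key (q - p) (by rw [hf, ← sq_abs, sq]; gcongr)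
    linarith [pos (q + p)]
  · have := key (q + p) (by rw [hf, ← sq_abs, sq]; gcongr)
    linarith [pos (q - p)]

lemma bump (t a : ℝ) (ht : 0 < t) :
    Integrable (fun q : ℝ => 3 * t * (1 + (√t * (q - a)) ^ 2)⁻¹) ∧
    (∫ q : ℝ, 3 * t * (1 + (√t * (q - a)) ^ 2)⁻¹) = 3 * Real.pi * √t := by
  have hs : 0 < √t := Real.sqrt_pos.mpr ht
  constructor
  · exact (((integrable_inv_one_add_sq.comp_mul_left' hs.ne').comp_sub_right a)).const_mul (3 * t)
  · rw [integral_const_mul,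
      integral_sub_right_eq_self (fun q : ℝ => (1 + (√t * q) ^ 2)⁻¹) a,
      Measure.integral_comp_mul_left (fun q : ℝ => (1 + q ^ 2)⁻¹), integral_univ_inv_one_add_sq,
      abs_of_pos (inv_pos.mpr hs), smul_eq_mul]
    field_simp
    rw [Real.sq_sqrt ht.le]

lemma phiK_meas (t p : ℝ) : Measurable (fun q : ℝ => phiK t p q) := by
  unfold phiK
  refine Measurable.ite ?_ (by fun_prop) (by fun_prop)
  exact measurableSet_eq_fun (by fun_prop) (by fun_prop)

/-- Hughes–Schlag, Theorem 2.3: there is `c > 0` with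
`∫ |φ_t(p,q)| dq ≤ c √t`, uniformly in `p`. -/
theorem phiK_L1_bound :
    ∃ c : ℝ, 0 < c ∧ ∀ t : ℝ, 0 < t → ∀ p : ℝ,
      Integrable (fun q : ℝ => ‖phiK t p q‖) ∧
      (∫ q : ℝ, ‖phiK t p q‖) ≤ c * Real.sqrt t := by
  refine ⟨6 * Real.pi, by positivity, fun t ht p => ?_⟩
  obtain ⟨i1, v1⟩ := bump t p ht
  obtain ⟨i2, v2⟩ := bump t (-p) ht
  simp only [sub_neg_eq_add] at i2 v2
  have hi : Integrable (fun q : ℝ => ‖phiK t p q‖) := by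
    refine (i1.add i2).mono' (phiK_meas t p).norm.aestronglyMeasurable (ae_of_all _ fun q => ?_)
    rw [norm_norm]
    exact phiK_le t p q ht
  refine ⟨hi, ?_⟩
  have := integral_mono hi (i1.add i2) (fun q => phiK_le t p q ht)
  have h2 := integral_add i1 i2
  simp only [Pi.add_apply] at this
  rw [h2, v1, v2] at this
  linarith
end

section
/- Let v : ℝ → ℂ be measurable and bounded, with conj(v(p)) = v(−p) for all p. Define kernels K_{t,n}[v] recursively by K_{t,1}[v](p,q) = φ_t(p,q) · v(p−q)/√(2π) and, for n ≥ 2, K_{t,n}[v](p,q) = ∫₀^t ∫_ℝ K_{s,n−1}[v](p,z) e^{is(z²−q²)} v(z−q)/√(2π) dz ds. Then for every n ≥ 1 and every t > 0, sup_{p∈ℝ} ∫_ℝ |K_{t,n}[v](p,q)| dq is finite. -/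
open MeasureTheory Filter Topology

/-- The Dyson expansion kernels: `dysonKernel v n` is the `(n+1)`-st kernel `K_{·,n+1}[v]`,
so `dysonKernel v 0 t p q = φ_t(p,q) v(p−q)/√(2π)` and
`dysonKernel v (n+1) t p q = ∫₀ᵗ ∫ K_{s,n+1}[v](p,z) e^{is(z²−q²)} v(z−q)/√(2π) dz ds`. -/
noncomputable def dysonKernel (v : ℝ → ℂ) : ℕ → ℝ → ℝ → ℝ → ℂ
  | 0 => fun t p q => phiK t p q * v (p - q) / ((Real.sqrt (2 * Real.pi) : ℝ) : ℂ)
  | n + 1 => fun t p q =>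
      ∫ s in (0 : ℝ)..t, ∫ z : ℝ,
        dysonKernel v n s p z * Complex.exp (Complex.I * s * ((z : ℂ) ^ 2 - (q : ℂ) ^ 2)) *
          v (z - q) / ((Real.sqrt (2 * Real.pi) : ℝ) : ℂ)

/-- phase -/
noncomputable def phE (s a z : ℝ) : ℂ := Complex.exp (Complex.I * s * ((a : ℂ) ^ 2 - (z : ℂ) ^ 2))

lemma phE_norm (s a z : ℝ) : ‖phE s a z‖ = 1 := by
  have : Complex.I * s * ((a : ℂ) ^ 2 - (z : ℂ) ^ 2) = ((s * (a ^ 2 - z ^ 2) : ℝ) : ℂ) * Complex.I := by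
    push_cast; ring
  rw [phE, this, Complex.norm_exp_ofReal_mul_I]

lemma phE_cont : Continuous (fun x : ℝ × ℝ × ℝ => phE x.1 x.2.1 x.2.2) := by
  unfold phE; fun_prop

lemma phE_hasDerivAt (s a z : ℝ) :
    HasDerivAt (fun s => phE s a z) (Complex.I * ((a : ℂ) ^ 2 - (z : ℂ) ^ 2) * phE s a z) s := by
  have h1 : HasDerivAt (fun s : ℝ => Complex.I * (s : ℂ) * ((a : ℂ) ^ 2 - (z : ℂ) ^ 2))
      (Complex.I * 1 * ((a : ℂ) ^ 2 - (z : ℂ) ^ 2)) s :=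
    ((Complex.ofRealCLM.hasDerivAt (x := s)).const_mul Complex.I).mul_const _
  have := h1.cexp
  unfold phE
  convert this using 1
  ring

noncomputable def wt (a z : ℝ) : ℝ := (1 + (z - a) ^ 2)⁻¹ + (1 + (z + a) ^ 2)⁻¹

noncomputable def kap (a z : ℝ) (i : Bool) : ℂ :=
  if |a ^ 2 - z ^ 2| < 1 then (if i then 0 else 1) else (Complex.I * ((a : ℂ) ^ 2 - (z : ℂ) ^ 2))⁻¹

lemma kap_le (a z : ℝ) (i : Bool) : ‖kap a z i‖ ≤ 2 * wt a z := by
  have key : max 1 |a ^ 2 - z ^ 2| * (2 * wt a z) ≥ 1 := by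
    set m := max 1 |a ^ 2 - z ^ 2|
    have hm : 1 ≤ m := le_max_left _ _
    have h2 : |a ^ 2 - z ^ 2| ≤ m := le_max_right _ _
    have h3 : |a ^ 2 - z ^ 2| = |z - a| * |z + a| := by
      rw [← abs_mul, ← abs_neg]; ring_nf
    have p1 : 0 < (1 + (z - a) ^ 2)⁻¹ := by positivity
    have p2 : 0 < (1 + (z + a) ^ 2)⁻¹ := by positivity
    unfold wt
    have aux : ∀ x y : ℝ, |x| * |y| ≤ m → |x| ≤ |y| → m * (2 * (1 + x ^ 2)⁻¹) ≥ 1 := by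
      intro x y hxy hle
      have : x ^ 2 ≤ m := by
        rw [← sq_abs]; nlinarith [abs_nonneg x]
      have h4 : (1 + x ^ 2) * (1 + x ^ 2)⁻¹ = 1 := mul_inv_cancel₀ (by positivity)
      have h5 : 0 < (1 + x ^ 2)⁻¹ := by positivity
      nlinarith
    rcases le_total |z - a| |z + a| with h | h
    · have := aux (z - a) (z + a) (by linarith) h
      nlinarith
    · have := aux (z + a) (z - a) (by linarith [mul_comm |z - a| |z + a|]) h
      nlinarith
  have hw : 0 < wt a z := by unfold wt; positivity
  unfold kap
  split_ifs with h hi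
  · simp; positivity
  · rw [max_eq_left h.le] at key; simp; linarith
  · push Not at h
    rw [max_eq_right h] at key
    have : ‖(Complex.I * ((a : ℂ) ^ 2 - (z : ℂ) ^ 2))⁻¹‖ = |a ^ 2 - z ^ 2|⁻¹ := by
      rw [norm_inv, norm_mul, Complex.norm_I, one_mul]
      rw [← Complex.ofReal_pow, ← Complex.ofReal_pow, ← Complex.ofReal_sub, Complex.norm_real, Real.norm_eq_abs]
    rw [this]
    exact (inv_le_iff_one_le_mul₀' (by linarith)).2 key

lemma wt_cont : Continuous (fun x : ℝ × ℝ => wt x.1 x.2) := by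
  unfold wt
  refine Continuous.add (Continuous.inv₀ (by fun_prop) fun x => by positivity)
    (Continuous.inv₀ (by fun_prop) fun x => by positivity)

lemma wt_lintegral (a : ℝ) : ∫⁻ z, ENNReal.ofReal (wt a z) = ENNReal.ofReal (2 * Real.pi) := by
  have i1 : Integrable (fun z : ℝ => (1 + (z - a) ^ 2)⁻¹) :=
    integrable_inv_one_add_sq.comp_sub_right a
  have i2 : Integrable (fun z : ℝ => (1 + (z + a) ^ 2)⁻¹) :=
    integrable_inv_one_add_sq.comp_add_right a
  rw [← ofReal_integral_eq_lintegral_ofReal]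
  · unfold wt
    rw [integral_add i1 i2, integral_sub_right_eq_self (fun z : ℝ => (1 + z ^ 2)⁻¹) a,
      integral_add_right_eq_self (fun z : ℝ => (1 + z ^ 2)⁻¹) a, integral_univ_inv_one_add_sq]
    ring_nf
  · exact i1.add i2
  · exact Eventually.of_forall fun z => by unfold wt; positivity

lemma kap_meas : Measurable (fun x : ℝ × ℝ × Bool => kap x.1 x.2.1 x.2.2) := by
  unfold kap
  refine Measurable.ite (measurableSet_lt (by fun_prop) (by fun_prop)) ?_ (by fun_prop)
  exact (measurable_of_countable (fun i : Bool => (if i then (0:ℂ) else 1))).comp (by fun_prop)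

noncomputable def tU (u u₁ : ℝ → ℂ) (a z : ℝ) (i : Bool) (t : ℝ) : ℂ :=
  if i then u t else if |a ^ 2 - z ^ 2| < 1 then ∫ s in (0:ℝ)..t, phE s a z * u s
    else - u 0 - ∫ s in (0:ℝ)..t, phE s a z * u₁ s

noncomputable def tU₁ (u u₁ : ℝ → ℂ) (a z : ℝ) (i : Bool) (t : ℝ) : ℂ :=
  if i then u₁ t else if |a ^ 2 - z ^ 2| < 1 then phE t a z * u t
    else - (phE t a z * u₁ t)

lemma phE_cont1 (a z : ℝ) : Continuous (fun s => phE s a z) := by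
  unfold phE; fun_prop

section one
variable {u u₁ : ℝ → ℂ} (hd : ∀ s, HasDerivAt u (u₁ s) s) (hc : Continuous u₁)
include hd hc

lemma tU_hasDerivAt (a z : ℝ) (i : Bool) (t : ℝ) :
    HasDerivAt (tU u u₁ a z i) (tU₁ u u₁ a z i t) t := by
  have hu : Continuous u := continuous_iff_continuousAt.2 fun s => (hd s).continuousAt
  unfold tU tU₁
  have c1 : Continuous fun s => phE s a z * u s := (phE_cont1 a z).mul hu
  have c2 : Continuous fun s => phE s a z * u₁ s := (phE_cont1 a z).mul hc
  cases i
  · by_cases h : |a ^ 2 - z ^ 2| < 1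
    · simp only [h, if_true, Bool.false_eq_true, if_false]
      exact c1.integral_hasStrictDerivAt 0 t |>.hasDerivAt
    · simp only [h, Bool.false_eq_true, if_false]
      exact (c2.integral_hasStrictDerivAt 0 t |>.hasDerivAt).const_sub _
  · simpa using hd t

lemma tU₁_cont (a z : ℝ) (i : Bool) : Continuous (tU₁ u u₁ a z i) := by
  have hu : Continuous u := continuous_iff_continuousAt.2 fun s => (hd s).continuousAt
  unfold tU₁
  have c1 : Continuous fun s => phE s a z * u s := (phE_cont1 a z).mul hu
  have c2 : Continuous fun s => phE s a z * u₁ s := (phE_cont1 a z).mul hc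
  split_ifs
  · exact hc
  · exact c1
  · exact c2.neg

lemma key_ibp (a z t : ℝ) : ∫ s in (0:ℝ)..t, phE s a z * u s =
    kap a z true * phE t a z * tU u u₁ a z true t + kap a z false * tU u u₁ a z false t := by
  have hu : Continuous u := continuous_iff_continuousAt.2 fun s => (hd s).continuousAt
  have c1 : Continuous fun s => phE s a z * u s := (phE_cont1 a z).mul hu
  have c2 : Continuous fun s => phE s a z * u₁ s := (phE_cont1 a z).mul hc
  by_cases h : |a ^ 2 - z ^ 2| < 1
  · simp [kap, tU, h]
  · simp only [kap, tU, h, if_true, if_false, Bool.false_eq_true]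
    set m : ℂ := Complex.I * ((a : ℂ) ^ 2 - (z : ℂ) ^ 2) with hm
    have hm0 : m ≠ 0 := by
      intro h0
      apply h
      have : (a : ℂ) ^ 2 - (z : ℂ) ^ 2 = 0 := by simpa [hm] using h0
      have : a ^ 2 - z ^ 2 = 0 := by exact_mod_cast this
      rw [this]; simp
    have ftc := intervalIntegral.integral_eq_sub_of_hasDerivAt (a := 0) (b := t)
      (f := fun s => phE s a z * u s) (f' := fun s => m * (phE s a z * u s) + phE s a z * u₁ s)
      (fun s _ => by
        refine ((phE_hasDerivAt s a z).mul (hd s)).congr_deriv ?_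
        rw [hm]; ring)
      ((c1.const_mul m).add c2 |>.intervalIntegrable _ _)
    rw [intervalIntegral.integral_add ((c1.const_mul m).intervalIntegrable _ _)
      (c2.intervalIntegrable _ _), intervalIntegral.integral_const_mul] at ftc
    have e0 : phE 0 a z = 1 := by simp [phE]
    rw [e0, one_mul] at ftc
    have : ∫ s in (0:ℝ)..t, phE s a z * u s = m⁻¹ * (m * ∫ s in (0:ℝ)..t, phE s a z * u s) := by
      field_simp
    rw [this, eq_sub_of_add_eq ftc]
    ring

end one

lemma int_bd {f : ℝ → ℂ} {A T : ℝ} (hA : 0 ≤ A) (a z t : ℝ) (ht : t ∈ Set.Icc 0 T)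
    (hf : ∀ s ∈ Set.Icc 0 T, ‖f s‖ ≤ A) : ‖∫ s in (0:ℝ)..t, phE s a z * f s‖ ≤ T * A := by
  have := intervalIntegral.norm_integral_le_of_norm_le_const (a := 0) (b := t) (C := A)
    (f := fun s => phE s a z * f s) (fun s hs => by
      rw [Set.uIoc_of_le ht.1] at hs
      rw [norm_mul, phE_norm, one_mul]
      exact hf s ⟨hs.1.le, hs.2.trans ht.2⟩)
  refine this.trans ?_
  rw [sub_zero, abs_of_nonneg ht.1, mul_comm]
  exact mul_le_mul_of_nonneg_right ht.2 hA

lemma tU_bd {u u₁ : ℝ → ℂ} {A T : ℝ} (hA : 0 ≤ A) (hT : 0 ≤ T)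
    (hu : ∀ s ∈ Set.Icc 0 T, ‖u s‖ ≤ A) (hu1 : ∀ s ∈ Set.Icc 0 T, ‖u₁ s‖ ≤ A)
    (a z : ℝ) (i : Bool) (t : ℝ) (ht : t ∈ Set.Icc 0 T) :
    ‖tU u u₁ a z i t‖ ≤ (1 + T) * A ∧ ‖tU₁ u u₁ a z i t‖ ≤ (1 + T) * A := by
  have hTA : 0 ≤ T * A := by positivity
  have b1 := int_bd hA a z t ht hu
  have b2 := int_bd hA a z t ht hu1
  have h1 := hu t ht
  have h2 := hu1 t ht
  have h0 := hu 0 ⟨le_rfl, hT⟩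
  constructor
  · unfold tU
    split_ifs
    · linarith
    · linarith
    · refine (norm_sub_le _ _).trans ?_
      rw [norm_neg]; linarith
  · unfold tU₁
    split_ifs
    · linarith
    · rw [norm_mul, phE_norm]; linarith
    · rw [norm_neg, norm_mul, phE_norm]; linarith

/-- representation as a superposition of modulated `C¹` functions of time -/
structure DysRep (T A : ℝ) (M : ENNReal) (h : ℝ → ℝ → ℂ) where
  X : Type
  ms : MeasurableSpace X
  ν : Measure X
  sf : SFinite ν
  ρ : X → ℝ
  b : X → ℝ → ℂ
  u : X → ℝ → ℂ
  u₁ : X → ℝ → ℂ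
  β : X → ENNReal
  hρ : Measurable ρ
  hb : Measurable (fun y : X × ℝ => b y.1 y.2)
  hβ : Measurable β
  hu : ∀ s, Measurable (fun x => u x s)
  hu₁ : ∀ s, Measurable (fun x => u₁ x s)
  hbβ : ∀ x q, ‖b x q‖ₑ ≤ β x
  hM : ∫⁻ x, β x ∂ν ≤ M
  hd : ∀ x s, HasDerivAt (u x) (u₁ x s) s
  hc : ∀ x, Continuous (u₁ x)
  hA : ∀ x, ∀ s ∈ Set.Icc 0 T, ‖u x s‖ ≤ A
  hA₁ : ∀ x, ∀ s ∈ Set.Icc 0 T, ‖u₁ x s‖ ≤ A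
  hh : ∀ s ∈ Set.Icc 0 T, ∀ q, h s q = ∫ x, b x q * Complex.exp (Complex.I * s * (ρ x : ℂ) ^ 2) * u x s ∂ν

noncomputable def Kop (h : ℝ → ℝ → ℂ) (t z : ℝ) : ℂ :=
  ∫ s in (0:ℝ)..t, h s z * Complex.exp (-(Complex.I * s * (z : ℂ) ^ 2))

noncomputable def Nop (v : ℝ → ℂ) (h : ℝ → ℝ → ℂ) (s q : ℝ) : ℂ :=
  ∫ z, Kop h s z * Complex.exp (Complex.I * s * (z : ℂ) ^ 2) * v (z - q)

lemma Kop_eq {T A : ℝ} {M : ENNReal} {h : ℝ → ℝ → ℂ} (R : DysRep T A M h) (hM : M < ⊤)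
    (t z : ℝ) (ht : t ∈ Set.Icc 0 T) :
    letI := R.ms
    Kop h t z = ∫ x, R.b x z * (∫ s in (0:ℝ)..t, phE s (R.ρ x) z * R.u x s) ∂(R.ν) := by
  let _ := R.ms
  have _ := R.sf
  have hucont : ∀ x, Continuous (R.u x) := fun x =>
    continuous_iff_continuousAt.2 fun s => (R.hd x s).continuousAt
  have humeas : Measurable (fun y : ℝ × R.X => R.u y.2 y.1) :=
    measurable_uncurry_of_continuous_of_measurable (u := fun s x => R.u x s)
      (fun x => hucont x) R.hu
  have hbm : Measurable (fun x => R.b x z) := R.hb.comp (measurable_id.prodMk measurable_const)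
  simp only [← intervalIntegral.integral_const_mul]
  unfold Kop
  rw [intervalIntegral.integral_of_le ht.1]
  simp only [intervalIntegral.integral_of_le ht.1]
  rw [← integral_integral_swap (μ := volume.restrict (Set.Ioc 0 t)) (ν := R.ν) (f := fun s x => R.b x z * (phE s (R.ρ x) z * R.u x s))]
  · refine setIntegral_congr_fun measurableSet_Ioc fun s hs => ?_
    rw [R.hh s ⟨hs.1.le, hs.2.trans ht.2⟩ z, ← integral_mul_const]
    congr 1
    ext x
    have : phE s (R.ρ x) z = Complex.exp (Complex.I * s * (R.ρ x : ℂ) ^ 2) * Complex.exp (-(Complex.I * s * (z : ℂ) ^ 2)) := by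
      rw [phE, ← Complex.exp_add]; ring_nf
    rw [this]; ring
  · refine ⟨?_, ?_⟩
    · refine Measurable.aestronglyMeasurable ?_
      refine (hbm.comp measurable_snd).mul (Measurable.mul ?_ humeas)
      exact phE_cont.measurable.comp (measurable_fst.prodMk ((R.hρ.comp measurable_snd).prodMk measurable_const))
    · have : ∀ᵐ y ∂((volume.restrict (Set.Ioc 0 t)).prod R.ν), y.1 ∈ Set.Ioc 0 t := by
        have h1 : ∀ᵐ s ∂(volume.restrict (Set.Ioc (0:ℝ) t)), s ∈ Set.Ioc 0 t := ae_restrict_mem measurableSet_Ioc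
        exact Measure.quasiMeasurePreserving_fst.ae h1
      refine lt_of_le_of_lt (lintegral_mono_ae (g := fun y => ENNReal.ofReal A * R.β y.2) ?_) ?_
      · filter_upwards [this] with y hy
        simp only [Function.uncurry]
        rw [enorm_mul, enorm_mul, mul_comm]
        gcongr
        · rw [← ofReal_norm, phE_norm, ← ofReal_norm, ENNReal.ofReal_one, one_mul]
          exact ENNReal.ofReal_le_ofReal (R.hA _ _ ⟨hy.1.le, hy.2.trans ht.2⟩)
        · exact R.hbβ _ _
      · rw [lintegral_prod _ (by have := R.hβ; fun_prop)]
        simp only [lintegral_const_mul _ R.hβ, lintegral_const]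
        refine ENNReal.mul_lt_top (ENNReal.mul_lt_top ENNReal.ofReal_lt_top (R.hM.trans_lt hM)) ?_
        simp

lemma Kop_bd {T A : ℝ} {M : ENNReal} {h : ℝ → ℝ → ℂ} (hA : 0 ≤ A) (hT : 0 ≤ T) (R : DysRep T A M h) (hM : M < ⊤)
    (t : ℝ) (ht : t ∈ Set.Icc 0 T) :
    ∫⁻ z, ‖Kop h t z‖ₑ ≤ ENNReal.ofReal (4 * (1 + T) * A) * (M * ENNReal.ofReal (2 * Real.pi)) := by
  let _ := R.ms
  have _ := R.sf
  have hβ := R.hβ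
  have hρ := R.hρ
  have hw : Measurable fun y : R.X × ℝ => ENNReal.ofReal (wt (R.ρ y.1) y.2) :=
    (wt_cont.measurable.comp ((R.hρ.comp measurable_fst).prodMk measurable_snd)).ennreal_ofReal
  have pt : ∀ z, ‖Kop h t z‖ₑ ≤ ∫⁻ x, ENNReal.ofReal (4 * (1 + T) * A) * (R.β x * ENNReal.ofReal (wt (R.ρ x) z)) ∂(R.ν) := by
    intro z
    rw [Kop_eq R hM t z ht]
    refine (enorm_integral_le_lintegral_enorm _).trans (lintegral_mono fun x => ?_)
    rw [enorm_mul, mul_left_comm]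
    refine mul_le_mul' (R.hbβ x z) ?_
    rw [key_ibp (R.hd x) (R.hc x), ← ofReal_norm, ← ENNReal.ofReal_mul (by positivity)]
    refine ENNReal.ofReal_le_ofReal ?_
    have b1 := (tU_bd hA hT (R.hA x) (R.hA₁ x) (R.ρ x) z true t ht).1
    have b2 := (tU_bd hA hT (R.hA x) (R.hA₁ x) (R.ρ x) z false t ht).1
    refine (norm_add_le _ _).trans ?_
    rw [norm_mul, norm_mul, norm_mul, phE_norm, mul_one]
    have hw : 0 ≤ wt (R.ρ x) z := by unfold wt; positivity
    have := mul_le_mul (kap_le (R.ρ x) z true) b1 (norm_nonneg _) (by positivity)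
    have := mul_le_mul (kap_le (R.ρ x) z false) b2 (norm_nonneg _) (by positivity)
    linarith
  refine (lintegral_mono pt).trans ?_
  have hmm : Measurable (Function.uncurry fun (z : ℝ) (x : R.X) =>
      ENNReal.ofReal (4 * (1 + T) * A) * (R.β x * ENNReal.ofReal (wt (R.ρ x) z))) :=
    ((hβ.comp measurable_snd).mul (hw.comp measurable_swap)).const_mul _
  rw [lintegral_lintegral_swap hmm.aemeasurable]
  have : ∀ x, ∫⁻ z, ENNReal.ofReal (4 * (1 + T) * A) * (R.β x * ENNReal.ofReal (wt (R.ρ x) z)) =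
      ENNReal.ofReal (4 * (1 + T) * A) * (R.β x * ENNReal.ofReal (2 * Real.pi)) := by
    intro x
    have hm : Measurable fun z => ENNReal.ofReal (wt (R.ρ x) z) :=
      (wt_cont.measurable.comp (by fun_prop : Measurable fun z => (R.ρ x, z))).ennreal_ofReal
    rw [lintegral_const_mul _ (hm.const_mul _), lintegral_const_mul _ hm, wt_lintegral]
  simp only [this]
  rw [lintegral_const_mul _ (hβ.mul_const _), lintegral_mul_const _ hβ]
  gcongr
  exact R.hM

lemma par_meas {X : Type} [MeasurableSpace X] (u : X → ℝ → ℂ) (hc : ∀ x, Continuous (u x))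
    (hu : ∀ s, Measurable (fun x => u x s)) (ρ : X → ℝ) (hρ : Measurable ρ) (t : ℝ) :
    Measurable (fun y : ℝ × (X × Bool) => ∫ s in (0:ℝ)..t, phE s (ρ y.2.1) y.1 * u y.2.1 s) := by
  have humeas : Measurable (fun y : ℝ × X => u y.2 y.1) :=
    measurable_uncurry_of_continuous_of_measurable (u := fun s x => u x s) hc hu
  have hm : Measurable (fun w : (ℝ × (X × Bool)) × ℝ => phE w.2 (ρ w.1.2.1) w.1.1 * u w.1.2.1 w.2) := by
    refine Measurable.mul ?_ (humeas.comp (by fun_prop : Measurable fun w : (ℝ × (X × Bool)) × ℝ => (w.2, w.1.2.1)))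
    exact phE_cont.measurable.comp (by fun_prop :
      Measurable fun w : (ℝ × (X × Bool)) × ℝ => (w.2, ρ w.1.2.1, w.1.1))
  unfold intervalIntegral
  exact (hm.stronglyMeasurable.integral_prod_right' (ν := volume.restrict (Set.Ioc 0 t))).measurable.sub
    (hm.stronglyMeasurable.integral_prod_right' (ν := volume.restrict (Set.Ioc t 0))).measurable

set_option maxHeartbeats 1000000 in
noncomputable def repStep {T A : ℝ} {M : ENNReal} {h : ℝ → ℝ → ℂ} (hA : 0 ≤ A) (hT : 0 ≤ T)
    (R : DysRep T A M h) (hM : M < ⊤) (w : ℝ → ℂ) (hw : Measurable w) (C : ℝ) (hC : ∀ x, ‖w x‖ ≤ C) :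
    DysRep T ((1 + T) * A) (2 * (ENNReal.ofReal (2 * C) * (M * ENNReal.ofReal (2 * Real.pi)))) (Nop w h) := by
  letI := R.ms
  haveI := R.sf
  have hβ := R.hβ
  have hρ := R.hρ
  have hu := R.hu
  have hu₁ := R.hu₁
  have hb := R.hb
  have hC0 : 0 ≤ C := (norm_nonneg _).trans (hC 0)
  have hucont : ∀ x, Continuous (R.u x) := fun x =>
    continuous_iff_continuousAt.2 fun s => (R.hd x s).continuousAt
  have sBool : MeasurableSet {y : ℝ × (R.X × Bool) | y.2.2 = true} :=
    (measurableSet_singleton true).preimage (by fun_prop : Measurable fun y : ℝ × (R.X × Bool) => y.2.2)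
  have sNear : MeasurableSet {y : ℝ × (R.X × Bool) | |R.ρ y.2.1 ^ 2 - y.1 ^ 2| < 1} :=
    measurableSet_lt (by fun_prop) (by fun_prop)
  have hwt : Measurable fun y : ℝ × (R.X × Bool) => ENNReal.ofReal (wt (R.ρ y.2.1) y.1) :=
    (wt_cont.measurable.comp (by fun_prop : Measurable fun y : ℝ × (R.X × Bool) => (R.ρ y.2.1, y.1))).ennreal_ofReal
  have hρ' : Measurable fun y : ℝ × (R.X × Bool) => if y.2.2 = true then R.ρ y.2.1 else y.1 :=
    Measurable.ite sBool (by fun_prop) (by fun_prop)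
  have hb' : Measurable fun y : (ℝ × (R.X × Bool)) × ℝ =>
      w (y.1.1 - y.2) * R.b y.1.2.1 y.1.1 * kap (R.ρ y.1.2.1) y.1.1 y.1.2.2 := by
    refine ((hw.comp (by fun_prop)).mul (hb.comp (by fun_prop :
      Measurable fun y : (ℝ × (R.X × Bool)) × ℝ => (y.1.2.1, y.1.1)))).mul (kap_meas.comp (by fun_prop :
      Measurable fun y : (ℝ × (R.X × Bool)) × ℝ => (R.ρ y.1.2.1, y.1.1, y.1.2.2)))
  have hβ' : Measurable fun y : ℝ × (R.X × Bool) =>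
      ENNReal.ofReal (2 * C) * (R.β y.2.1 * ENNReal.ofReal (wt (R.ρ y.2.1) y.1)) :=
    ((hβ.comp (by fun_prop)).mul hwt).const_mul _
  have hu' : ∀ t, Measurable fun y : ℝ × (R.X × Bool) =>
      tU (R.u y.2.1) (R.u₁ y.2.1) (R.ρ y.2.1) y.1 y.2.2 t := by
    intro t
    unfold tU
    refine Measurable.ite sBool ((hu t).comp (by fun_prop)) (Measurable.ite sNear
      (par_meas R.u hucont hu _ hρ t) (Measurable.sub ?_ (par_meas R.u₁ R.hc hu₁ _ hρ t)))
    exact ((hu 0).comp (by fun_prop : Measurable fun y : ℝ × (R.X × Bool) => y.2.1)).neg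
  have hu₁' : ∀ t, Measurable fun y : ℝ × (R.X × Bool) =>
      tU₁ (R.u y.2.1) (R.u₁ y.2.1) (R.ρ y.2.1) y.1 y.2.2 t := by
    intro t
    have hp : Measurable fun y : ℝ × (R.X × Bool) => phE t (R.ρ y.2.1) y.1 :=
      phE_cont.measurable.comp (by fun_prop : Measurable fun y : ℝ × (R.X × Bool) => (t, R.ρ y.2.1, y.1))
    unfold tU₁
    refine Measurable.ite sBool ((hu₁ t).comp (by fun_prop)) (Measurable.ite sNear
      (hp.mul ((hu t).comp (by fun_prop))) (hp.mul ((hu₁ t).comp (by fun_prop))).neg)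
  have hbβ' : ∀ (y : ℝ × (R.X × Bool)) (q : ℝ),
      ‖w (y.1 - q) * R.b y.2.1 y.1 * kap (R.ρ y.2.1) y.1 y.2.2‖ₑ ≤
      ENNReal.ofReal (2 * C) * (R.β y.2.1 * ENNReal.ofReal (wt (R.ρ y.2.1) y.1)) := by
    intro y q
    rw [enorm_mul, enorm_mul, ← ofReal_norm (w _), ← ofReal_norm (kap _ _ _)]
    calc _ ≤ ENNReal.ofReal C * R.β y.2.1 * ENNReal.ofReal (2 * wt (R.ρ y.2.1) y.1) := by
          gcongr
          · exact hC _
          · exact R.hbβ _ _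
          · exact kap_le _ _ _
      _ = _ := by
          rw [ENNReal.ofReal_mul (by norm_num : (0:ℝ) ≤ 2), ENNReal.ofReal_mul (by norm_num : (0:ℝ) ≤ 2)]
          ring
  have hM' : ∫⁻ y, ENNReal.ofReal (2 * C) * (R.β y.2.1 * ENNReal.ofReal (wt (R.ρ y.2.1) y.1))
      ∂((volume : Measure ℝ).prod (R.ν.prod (Measure.count : Measure Bool))) ≤
      2 * (ENNReal.ofReal (2 * C) * (M * ENNReal.ofReal (2 * Real.pi))) := by
    rw [lintegral_prod_symm' _ hβ']
    have : ∀ x : R.X × Bool, ∫⁻ z, ENNReal.ofReal (2 * C) * (R.β x.1 * ENNReal.ofReal (wt (R.ρ x.1) z)) =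
      ENNReal.ofReal (2 * C) * (R.β x.1 * ENNReal.ofReal (2 * Real.pi)) := by
      intro x
      have hm : Measurable fun z => ENNReal.ofReal (wt (R.ρ x.1) z) := 
        (wt_cont.measurable.comp (by fun_prop : Measurable fun z => (R.ρ x.1, z))).ennreal_ofReal
      rw [lintegral_const_mul _ (hm.const_mul _), lintegral_const_mul _ hm, wt_lintegral]
    simp only [this]
    rw [lintegral_prod _ (by fun_prop)]
    simp only [lintegral_const]
    rw [lintegral_mul_const _ (by fun_prop), lintegral_const_mul _ (by fun_prop), lintegral_mul_const _ hβ, mul_comm]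
    have : Measure.count (Set.univ : Set Bool) = 2 := by
      have := Measure.count_apply_finset (Finset.univ : Finset Bool)
      rw [Finset.coe_univ] at this
      rw [this]; simp
    rw [this]
    gcongr
    exact R.hM
  have hbd := fun (y : ℝ × (R.X × Bool)) t ht =>
    tU_bd hA hT (R.hA y.2.1) (R.hA₁ y.2.1) (R.ρ y.2.1) y.1 y.2.2 t ht
  refine
  { X := ℝ × (R.X × Bool)
    ms := inferInstance
    ν := (volume : Measure ℝ).prod (R.ν.prod (Measure.count : Measure Bool))
    sf := inferInstance
    ρ := fun y => if y.2.2 = true then R.ρ y.2.1 else y.1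
    b := fun y q => w (y.1 - q) * R.b y.2.1 y.1 * kap (R.ρ y.2.1) y.1 y.2.2
    u := fun y t => tU (R.u y.2.1) (R.u₁ y.2.1) (R.ρ y.2.1) y.1 y.2.2 t
    u₁ := fun y t => tU₁ (R.u y.2.1) (R.u₁ y.2.1) (R.ρ y.2.1) y.1 y.2.2 t
    β := fun y => ENNReal.ofReal (2 * C) * (R.β y.2.1 * ENNReal.ofReal (wt (R.ρ y.2.1) y.1))
    hρ := hρ'
    hb := hb'
    hβ := hβ'
    hu := hu'
    hu₁ := hu₁'
    hbβ := hbβ'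
    hM := hM'
    hd := fun y s => tU_hasDerivAt (R.hd _) (R.hc _) _ _ _ _
    hc := fun y => tU₁_cont (R.hd _) (R.hc _) _ _ _
    hA := fun y t ht => (hbd y t ht).1
    hA₁ := fun y t ht => (hbd y t ht).2
    hh := ?_ }
  intro s hs q
  have hint : Integrable (fun y : ℝ × (R.X × Bool) =>
      w (y.1 - q) * R.b y.2.1 y.1 * kap (R.ρ y.2.1) y.1 y.2.2 *
      Complex.exp (Complex.I * s * (((if y.2.2 = true then R.ρ y.2.1 else y.1) : ℝ) : ℂ) ^ 2) *
      tU (R.u y.2.1) (R.u₁ y.2.1) (R.ρ y.2.1) y.1 y.2.2 s)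
      ((volume : Measure ℝ).prod (R.ν.prod (Measure.count : Measure Bool))) := by
    refine ⟨Measurable.aestronglyMeasurable ?_, ?_⟩
    · have m1 : Measurable fun y : ℝ × (R.X × Bool) => w (y.1 - q) * R.b y.2.1 y.1 * kap (R.ρ y.2.1) y.1 y.2.2 :=
        hb'.comp (measurable_id.prodMk measurable_const)
      refine Measurable.mul (Measurable.mul m1 ?_) (hu' s)
      exact Complex.measurable_exp.comp (((Complex.measurable_ofReal.comp hρ').pow_const 2).const_mul _)
    · refine lt_of_le_of_lt (lintegral_mono (g := fun y => ENNReal.ofReal (2 * C) * (R.β y.2.1 * ENNReal.ofReal (wt (R.ρ y.2.1) y.1)) * ENNReal.ofReal ((1 + T) * A)) fun y => ?_) ?_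
      · simp only
        rw [enorm_mul, enorm_mul]
        refine mul_le_mul' ?_ ?_
        · refine le_trans (le_of_eq ?_) (hbβ' y q)
          have : ∀ r : ℝ, ‖Complex.exp (Complex.I * s * (r : ℂ) ^ 2)‖ₑ = 1 := by
            intro r
            have := phE_norm s r 0
            simp only [phE, Complex.ofReal_zero, ne_eq, OfNat.ofNat_ne_zero, not_false_eq_true, zero_pow, sub_zero] at this
            rw [← ofReal_norm, this, ENNReal.ofReal_one]
          rw [this, mul_one]
        · rw [← ofReal_norm]
          exact ENNReal.ofReal_le_ofReal (hbd y s hs).1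
      · rw [lintegral_mul_const _ hβ']
        refine ENNReal.mul_lt_top (hM'.trans_lt ?_) ENNReal.ofReal_lt_top
        exact ENNReal.mul_lt_top (by simp) (ENNReal.mul_lt_top ENNReal.ofReal_lt_top (ENNReal.mul_lt_top hM ENNReal.ofReal_lt_top))
  rw [integral_prod _ hint]
  refine integral_congr_ae ?_
  filter_upwards [hint.prod_right_ae] with z hz
  rw [integral_prod _ hz, Kop_eq R hM s z hs, mul_assoc, ← integral_mul_const]
  refine integral_congr_ae (Eventually.of_forall fun x => ?_)
  simp only [integral_countable' (Integrable.of_finite), tsum_bool, key_ibp (R.hd x) (R.hc x)]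
  have e : phE s (R.ρ x) z * Complex.exp (Complex.I * s * (z : ℂ) ^ 2) = Complex.exp (Complex.I * s * (R.ρ x : ℂ) ^ 2) := by
    rw [phE, ← Complex.exp_add]; ring_nf
  simp only [measureReal_def, Measure.count_singleton, ENNReal.toReal_one, one_smul, if_true, Bool.false_eq_true, if_false]
  rw [← e]
  ring

noncomputable def repBase (T : ℝ) (w : ℝ → ℂ) (hw : Measurable w) (C : ℝ) (hC : ∀ x, ‖w x‖ ≤ C) (p : ℝ) :
    DysRep T 1 (ENNReal.ofReal C) (fun s q => w (p - q) * Complex.exp (Complex.I * s * (p : ℂ) ^ 2)) where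
  X := Unit
  ms := inferInstance
  ν := Measure.dirac ()
  sf := inferInstance
  ρ := fun _ => p
  b := fun _ q => w (p - q)
  u := fun _ _ => 1
  u₁ := fun _ _ => 0
  β := fun _ => ENNReal.ofReal C
  hρ := measurable_const
  hb := hw.comp (by fun_prop)
  hβ := measurable_const
  hu := fun _ => measurable_const
  hu₁ := fun _ => measurable_const
  hbβ := fun x q => by rw [← ofReal_norm]; exact ENNReal.ofReal_le_ofReal (hC _)
  hM := by simp
  hd := fun _ s => hasDerivAt_const s 1
  hc := fun _ => continuous_const
  hA := by simp
  hA₁ := by simp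
  hh := by simp

lemma Kop_base (w : ℝ → ℂ) (t p q : ℝ) :
    Kop (fun s q => w (p - q) * Complex.exp (Complex.I * s * (p : ℂ) ^ 2)) t q = phiK t p q * w (p - q) := by
  unfold Kop
  have e : ∀ s : ℝ, w (p - q) * Complex.exp (Complex.I * s * (p : ℂ) ^ 2) * Complex.exp (-(Complex.I * s * (q : ℂ) ^ 2))
      = w (p - q) * phE s p q := by
    intro s
    rw [phE, mul_assoc, ← Complex.exp_add]; ring_nf
  simp only [e, intervalIntegral.integral_const_mul]
  rw [mul_comm]
  congr 1
  unfold phiK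
  split_ifs with h
  · have : ∀ s, phE s p q = 1 := by
      intro s
      have h' : (p : ℂ) ^ 2 = (q : ℂ) ^ 2 := by exact_mod_cast h
      simp [phE, h']
    simp [this]
  · have hm : Complex.I * ((p : ℂ) ^ 2 - (q : ℂ) ^ 2) ≠ 0 := by
      intro h0
      apply h
      have : (p : ℂ) ^ 2 - (q : ℂ) ^ 2 = 0 := by simpa using h0
      exact_mod_cast sub_eq_zero.1 this
    rw [eq_div_iff hm, mul_comm, ← intervalIntegral.integral_const_mul,
      intervalIntegral.integral_eq_sub_of_hasDerivAt (fun s _ => phE_hasDerivAt s p q)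
        ((continuous_const.mul (phE_cont1 p q)).intervalIntegrable _ _)]
    simp [phE]

lemma dyson_rep (v : ℝ → ℂ) (hv : Measurable v) (C : ℝ) (hC : ∀ p, ‖v p‖ ≤ C) (T : ℝ) (hT : 0 ≤ T) (n : ℕ) :
    ∃ A : ℝ, 0 ≤ A ∧ ∃ M : ENNReal, M < ⊤ ∧ ∀ p, ∃ h, Nonempty (DysRep T A M h) ∧
      ∀ t q, dysonKernel v n t p q = Kop h t q := by
  set c : ℂ := ((Real.sqrt (2 * Real.pi) : ℝ) : ℂ) with hc
  have hw : Measurable fun x => v x / c := hv.div_const c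
  have hwC : ∀ x, ‖v x / c‖ ≤ C / ‖c‖ := fun x => by
    rw [norm_div]; gcongr; exact hC x
  induction n with
  | zero =>
    refine ⟨1, zero_le_one, _, ENNReal.ofReal_lt_top, fun p => ⟨_, ⟨repBase T _ hw _ hwC p⟩, fun t q => ?_⟩⟩
    refine Eq.trans ?_ (Kop_base (fun x => v x / c) t p q).symm
    simp only [dysonKernel]
    ring
  | succ n ih =>
    obtain ⟨A, hA, M, hM, H⟩ := ih
    refine ⟨(1 + T) * A, by positivity, 2 * (ENNReal.ofReal (2 * (C / ‖c‖)) * (M * ENNReal.ofReal (2 * Real.pi))),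
      ?_, fun p => ?_⟩
    · exact ENNReal.mul_lt_top (by simp) (ENNReal.mul_lt_top ENNReal.ofReal_lt_top (ENNReal.mul_lt_top hM ENNReal.ofReal_lt_top))
    obtain ⟨h, ⟨R⟩, hK⟩ := H p
    refine ⟨_, ⟨repStep hA hT R hM _ hw _ hwC⟩, fun t q => ?_⟩
    simp only [dysonKernel, hK]
    rw [Kop]
    simp only [Nop, ← integral_mul_const]
    congr 1
    ext s
    congr 1
    ext z
    have : Complex.exp (Complex.I * s * ((z : ℂ) ^ 2 - (q : ℂ) ^ 2)) =
      Complex.exp (Complex.I * s * (z : ℂ) ^ 2) * Complex.exp (-(Complex.I * s * (q : ℂ) ^ 2)) := by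
      rw [← Complex.exp_add]; ring_nf
    rw [this]
    ring


/-- For a bounded measurable `v` with `conj (v p) = v (−p)`, the row `L¹`-norms of every
Dyson kernel `K_{t,n}[v]` (here `n ≥ 1` corresponds to `dysonKernel v (n-1)`) are
uniformly bounded in `p`. -/
theorem dysonKernel_row_L1_finite (v : ℝ → ℂ) (hv : Measurable v)
    (hvb : ∃ C : ℝ, ∀ p : ℝ, ‖v p‖ ≤ C)
    (hvs : ∀ p : ℝ, (starRingEnd ℂ) (v p) = v (-p)) :
    ∀ n : ℕ, ∀ t : ℝ, 0 < t →
      (⨆ p : ℝ, ∫⁻ q : ℝ, (‖dysonKernel v n t p q‖₊ : ENNReal)) < ⊤ := by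
  intro n t ht
  obtain ⟨C, hC⟩ := hvb
  obtain ⟨A, hA, M, hM, H⟩ := dyson_rep v hv C hC t ht.le n
  refine lt_of_le_of_lt (iSup_le (a := ENNReal.ofReal (4 * (1 + t) * A) * (M * ENNReal.ofReal (2 * Real.pi)))
    fun p => ?_) ?_
  · obtain ⟨h, ⟨R⟩, hK⟩ := H p
    simp only [hK]
    exact Kop_bd hA ht.le R hM t ⟨ht.le, le_rfl⟩
  · exact ENNReal.mul_lt_top ENNReal.ofReal_lt_top (ENNReal.mul_lt_top hM ENNReal.ofReal_lt_top)
end
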